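/- Let $p, r \geq 0$ and $q \geq 1$ be integers and set $n = p+q+r$. Then $\det\left(\binom{p+r}{p+i-j}\right)_{0 \leq i,j \leq q-1} = \det\left(\binom{n-1-i}{p+q-1-j}\right)_{0 \leq i,j \leq q-1}$. -/

import Mathlib

/-- The extended binomial coefficient: `0` whenever the lower index is negative
(and, via `Nat.choose`, also `0` when it exceeds the upper index). -/
def ebinom (n : ℕ) (m : ℤ) : ℕ := if 0 ≤ m then n.choose m.toNat else 0

/-!
Pascal's recurrence says that the forward difference of `C(x, m)` in the upper index `x` is
`C(x, m - 1)`. Hence, reading the rows upwards, the entries of each column on the left are the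
iterated differences, and those on the right the successive values, of one and the same function.
Newton's formula passes from differences to values by the matrix of the `C(i, k)`, which is
unitriangular.
-/

theorem det_of_natCast_choose (R : Type*) [CommRing R] (n : ℕ) :
    (Matrix.of fun i k : Fin n ↦ ((i : ℕ).choose k : R)).det = 1 := by
  rw [Matrix.det_of_isLowerTriangular]
  · simp
  · intro i k hik
    have hlt : (i : ℕ) < k := hik
    simp [Nat.choose_eq_zero_of_lt hlt]

theorem shift_eq_sum_range_fwdDiff_iter_of_lt {M G : Type*} [AddCommMonoid M] [AddCommGroup G]
    (h : M) (f : M → G) {i n : ℕ} (hi : i < n) (y : M) :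
    f (y + i • h) = ∑ k ∈ Finset.range n, i.choose k • (fwdDiff h)^[k] f y := by
  rw [shift_eq_sum_fwdDiff_iter h f i y]
  refine Finset.sum_subset (Finset.range_mono hi) fun k _ hk ↦ ?_
  have hik : i < k := by simpa using hk
  rw [Nat.choose_eq_zero_of_lt hik, zero_smul]

theorem det_of_fwdDiff_iter {M R : Type*} [AddCommMonoid M] [CommRing R] (h : M) {n : ℕ}
    (f : Fin n → M → R) (y : Fin n → M) :
    (Matrix.of fun i j : Fin n ↦ (fwdDiff h)^[i] (f j) (y j)).det =
      (Matrix.of fun i j : Fin n ↦ f j (y j + (i : ℕ) • h)).det := by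
  rw [← one_mul (Matrix.det _), ← det_of_natCast_choose R n, ← Matrix.det_mul]
  congr 1
  ext i j
  simp [Matrix.mul_apply, shift_eq_sum_range_fwdDiff_iter_of_lt h (f j) i.isLt,
    Finset.sum_range]

theorem ebinom_natCast (n k : ℕ) : ebinom n k = n.choose k := by
  simp [ebinom]

theorem ebinom_of_neg (n : ℕ) {m : ℤ} (hm : m < 0) : ebinom n m = 0 :=
  if_neg hm.not_ge

theorem ebinom_succ_left (n : ℕ) (m : ℤ) :
    ebinom (n + 1) m = ebinom n (m - 1) + ebinom n m := by
  rcases lt_or_ge m 0 with hneg | hnonneg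
  · simp [ebinom_of_neg, hneg, show m - 1 < 0 by lia]
  · lift m to ℕ using hnonneg
    cases m with
    | zero => simp [ebinom]
    | succ k =>
      have hk : ((k + 1 : ℕ) : ℤ) - 1 = k := by simp
      rw [hk]
      simp only [ebinom_natCast, Nat.choose_succ_succ']

theorem fwdDiff_ebinom (m : ℤ) :
    fwdDiff 1 (fun x ↦ ebinom x m : ℕ → ℤ) = fun x ↦ (ebinom x (m - 1) : ℤ) := by
  ext x
  simp [fwdDiff, ebinom_succ_left]

theorem fwdDiff_iter_ebinom (m : ℤ) (k : ℕ) :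
    (fwdDiff 1)^[k] (fun x ↦ ebinom x m : ℕ → ℤ) = fun x ↦ (ebinom x (m - k) : ℤ) := by
  induction k with
  | zero => simp
  | succ k ih =>
    rw [Function.iterate_succ_apply', ih, fwdDiff_ebinom, Nat.cast_succ, sub_sub]

theorem det_of_ebinom_sub {q : ℕ} (N : Fin q → ℕ) (m : Fin q → ℤ) :
    (Matrix.of fun i j : Fin q ↦ (ebinom (N j) (m j - (i : ℕ)) : ℤ)).det =
      (Matrix.of fun i j : Fin q ↦ (ebinom (N j + i) (m j) : ℤ)).det := by
  simpa [fwdDiff_iter_ebinom] using det_of_fwdDiff_iter 1 (fun j x ↦ (ebinom x (m j) : ℤ)) N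

theorem band_det_row_reduction_general {q : ℕ} (N : Fin q → ℕ) (m : Fin q → ℤ) :
    (Matrix.of fun i j : Fin q ↦ (ebinom (N j) (m j - (i.rev : ℕ)) : ℤ)).det =
      (Matrix.of fun i j : Fin q ↦ (ebinom (N j + i.rev) (m j) : ℤ)).det := by
  rw [← Matrix.det_submatrix_equiv_self Fin.revPerm,
    ← Matrix.det_submatrix_equiv_self Fin.revPerm (Matrix.of fun i j ↦ (ebinom (N j + _) _ : ℤ))]
  simpa only [Matrix.submatrix, Matrix.of_apply, Fin.revPerm_apply, Fin.rev_rev] using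
    det_of_ebinom_sub (fun j ↦ N j.rev) (fun j ↦ m j.rev)

/-- The intermediate determinant identity of Lemma 5.3, obtained by repeated
row additions and the Pascal recurrence: with `n = p+q+r`, the band determinant
equals `det ((i,j) ↦ C(n-1-i, p+q-1-j))`. -/
theorem band_det_row_reduction (p q r : ℕ) (hq : 1 ≤ q) (n : ℕ) (hn : n = p + q + r) :
    (Matrix.of fun i j : Fin q =>
        (ebinom (p + r) ((p : ℤ) + (i : ℕ) - (j : ℕ)) : ℤ)).det =
      (Matrix.of fun i j : Fin q =>
        (Nat.choose (n - 1 - (i : ℕ)) (p + q - 1 - (j : ℕ)) : ℤ)).det := by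
  have lower_index (i j : Fin q) :
      (p : ℤ) + (i : ℕ) - (j : ℕ) = ((p + q - 1 - j : ℕ) : ℤ) - (i.rev : ℕ) := by
    rw [Fin.val_rev]; omega
  have upper_index (i : Fin q) : n - 1 - i = p + r + i.rev := by
    rw [Fin.val_rev]; omega
  simp only [lower_index, upper_index, ← ebinom_natCast]
  exact band_det_row_reduction_general (fun _ ↦ p + r) (fun j ↦ ((p + q - 1 - j : ℕ) : ℤ))
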